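/- arXiv:hep-th/0304144 — 2 statements merged into one kernel-verified Lean document; each statement's English description precedes it below -/
import Mathlib

section
/- Let A be a unital associative algebra over ℂ and ω : A → ℂ a ℂ-linear functional with ω(1) = 1. For each N ≥ 1 let A^{⊗N} be the N-fold tensor power of A over ℂ (an algebra with factorwise multiplication), let ω^{⊗N} : A^{⊗N} → ℂ be the linear functional determined by ω^{⊗N}(x₁ ⊗ ⋯ ⊗ x_N) = ω(x₁)⋯ω(x_N), and for a ∈ A let ā^{(N)} = (1/N) ∑_{n=1}^N ι_n(a), where ι_n(a) = 1^{⊗(n−1)} ⊗ a ⊗ 1^{⊗(N−n)}. Then for any fixed a₁, …, a_k ∈ A: lim_{N→∞} ω^{⊗N}(ā₁^{(N)} ā₂^{(N)} ⋯ ā_k^{(N)}) = ω(a₁)·ω(a₂)⋯ω(a_k). -/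
/-!
Multiplying out `ā₁ ⋯ ā_k` gives the average, over all maps `f : Fin k → Fin N` assigning a site
to each factor, of the products `ι_{f 1}(a₁) ⋯ ι_{f k}(a_k)`. Such a product is an elementary
tensor whose entry at site `n` is the ordered product of the `a i` with `f i = n`
(`clusterProd`), so the product state evaluates it to `∏ n, ω (clusterProd a (f ⁻¹ n))`
(`siteValue`). If `f` is injective this is exactly `∏ i, ω (a i)` (`siteValue_of_injective`); in
all cases it is bounded independently of `N` (`norm_siteValue_le`), because at most `k` sites are
occupied and each of them contributes one of finitely many numbers. As the proportion
`N.descFactorial k / N ^ k` of injective maps tends to `1`, the average tends to `∏ i, ω (a i)`.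
-/

open scoped TensorProduct PiTensorProduct

/-- The product of the `a i` with `i ∈ S`, in increasing order of `i`. -/
def clusterProd {A : Type*} [Monoid A] {k : ℕ} (a : Fin k → A) (S : Finset (Fin k)) : A :=
  ((List.finRange k).map fun i => if i ∈ S then a i else 1).prod

lemma clusterProd_empty {A : Type*} [Monoid A] {k : ℕ} (a : Fin k → A) :
    clusterProd a ∅ = 1 := by
  simp [clusterProd]

lemma clusterProd_singleton {A : Type*} [Monoid A] {k : ℕ} (a : Fin k → A) (i : Fin k) :
    clusterProd a {i} = a i := by
  unfold clusterProd
  rw [List.prod_map_eq_pow_single i]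
  · simp [List.count_eq_one_of_mem (List.nodup_finRange k) (List.mem_finRange i)]
  · intro j hj _
    simp [hj]

/-- The value of the product state on the product of the operators `a i`, where `a i` acts on the
site `f i`: each site contributes `ω` of the ordered product of the operators placed there. -/
noncomputable def siteValue {A : Type*} [Ring A] [Algebra ℂ A] (ω : A →ₗ[ℂ] ℂ) {k N : ℕ}
    (a : Fin k → A) (f : Fin k → Fin N) : ℂ :=
  ∏ n, ω (clusterProd a (Finset.univ.filter fun i => f i = n))

/-- Unoccupied sites contribute `ω 1 = 1`, so only the sites in the image of `f` matter. -/
lemma siteValue_eq_prod_image {A : Type*} [Ring A] [Algebra ℂ A] (ω : A →ₗ[ℂ] ℂ) (hω1 : ω 1 = 1)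
    {k N : ℕ} (a : Fin k → A) (f : Fin k → Fin N) :
    siteValue ω a f = ∏ n ∈ Finset.univ.image f,
      ω (clusterProd a (Finset.univ.filter fun i => f i = n)) := by
  symm
  apply Finset.prod_subset (Finset.subset_univ _)
  intro n _ hn
  have h : (Finset.univ.filter fun i => f i = n) = ∅ := by
    ext i
    simp only [Finset.mem_image, Finset.mem_univ, true_and, not_exists] at hn
    simp [hn i]
  rw [h, clusterProd_empty, hω1]

lemma siteValue_of_injective {A : Type*} [Ring A] [Algebra ℂ A] (ω : A →ₗ[ℂ] ℂ) (hω1 : ω 1 = 1)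
    {k N : ℕ} (a : Fin k → A) (f : Fin k → Fin N) (hf : Function.Injective f) :
    siteValue ω a f = ∏ i, ω (a i) := by
  rw [siteValue_eq_prod_image ω hω1, Finset.prod_image hf.injOn]
  refine Finset.prod_congr rfl fun i _ => ?_
  have h : (Finset.univ.filter fun j => f j = f i) = {i} := by
    ext j
    simp [hf.eq_iff]
  rw [h, clusterProd_singleton]

lemma norm_siteValue_le {A : Type*} [Ring A] [Algebra ℂ A] (ω : A →ₗ[ℂ] ℂ) (hω1 : ω 1 = 1)
    {k N : ℕ} (a : Fin k → A) (f : Fin k → Fin N) :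
    ‖siteValue ω a f‖ ≤ (1 + ∑ S : Finset (Fin k), ‖ω (clusterProd a S)‖) ^ k := by
  have hsum : 0 ≤ ∑ S : Finset (Fin k), ‖ω (clusterProd a S)‖ :=
    Finset.sum_nonneg fun _ _ => norm_nonneg _
  rw [siteValue_eq_prod_image ω hω1, norm_prod]
  calc _ ≤ ∏ n ∈ Finset.univ.image f, (1 + ∑ S : Finset (Fin k), ‖ω (clusterProd a S)‖) := by
        refine Finset.prod_le_prod (fun _ _ => norm_nonneg _) fun n _ => ?_
        have := Finset.single_le_sum (f := fun S : Finset (Fin k) => ‖ω (clusterProd a S)‖)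
          (fun _ _ => norm_nonneg _)
          (Finset.mem_univ (Finset.univ.filter fun i => f i = n))
        linarith
    _ ≤ _ := by
        rw [Finset.prod_const]
        refine pow_le_pow_right₀ (by linarith) ?_
        simpa using Finset.card_image_le (s := Finset.univ) (f := f)

/-- Expansion of an ordered product of averages in a (noncommutative) algebra. -/
lemma prod_smul_sum {R : Type*} [Ring R] [Algebra ℂ R] {k N : ℕ} (c : ℂ)
    (x : Fin k → Fin N → R) :
    ((List.finRange k).map fun i => c • ∑ n, x i n).prod =
      c ^ k • ∑ f : Fin k → Fin N, ((List.finRange k).map fun i => x i (f i)).prod := by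
  have h1 := (MultilinearMap.mkPiAlgebraFin ℂ k R).map_smul_univ (fun _ => c)
    (fun i => ∑ n, x i n)
  rw [MultilinearMap.map_sum] at h1
  simpa [MultilinearMap.mkPiAlgebraFin_apply, List.ofFn_eq_map] using h1

lemma card_filter_injective (k N : ℕ) :
    (Finset.univ.filter fun f : Fin k → Fin N => Function.Injective f).card =
      N.descFactorial k := by
  rw [← Fintype.card_subtype,
    Fintype.card_congr (Equiv.subtypeInjectiveEquivEmbedding (Fin k) (Fin N)),
    Fintype.card_embedding_eq, Fintype.card_fin, Fintype.card_fin]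

lemma tendsto_descFactorial_div_pow (k : ℕ) :
    Filter.Tendsto (fun N : ℕ => (N.descFactorial k : ℝ) / (N : ℝ) ^ k) Filter.atTop
      (nhds 1) := by
  refine (Asymptotics.isEquivalent_iff_tendsto_one ?_).1 (isEquivalent_descFactorial k)
  filter_upwards [Filter.eventually_gt_atTop 0] with N hN
  positivity

/-- A bounded function on the maps `Fin k → Fin N` which equals `c` on the injective ones has
average close to `c`, with error controlled by the proportion of non-injective maps. -/
lemma norm_average_sub_le {k N : ℕ} (hN : 0 < N) (g : (Fin k → Fin N) → ℂ) (c : ℂ) (K : ℝ)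
    (hinj : ∀ f, Function.Injective f → g f = c) (hK : ∀ f, ‖g f‖ ≤ K) :
    ‖((N : ℂ)⁻¹) ^ k * ∑ f, g f - c‖ ≤
      (K + ‖c‖) * (1 - (N.descFactorial k : ℝ) / (N : ℝ) ^ k) := by
  have hN' : (N : ℂ) ≠ 0 := by exact_mod_cast hN.ne'
  have hNr : (N : ℝ) ≠ 0 := by exact_mod_cast hN.ne'
  have e : ((N : ℂ)⁻¹) ^ k * ∑ f, g f - c = ((N : ℂ)⁻¹) ^ k * ∑ f, (g f - c) := by
    rw [Finset.sum_sub_distrib, mul_sub]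
    simp [hN']
  have hcard : ((Finset.univ.filter fun f : Fin k → Fin N => ¬ Function.Injective f).card : ℝ) =
      (N : ℝ) ^ k - N.descFactorial k := by
    have h := Finset.card_filter_add_card_filter_not (s := (Finset.univ : Finset (Fin k → Fin N)))
      (fun f => Function.Injective f)
    rw [card_filter_injective] at h
    simp only [Finset.card_univ, Fintype.card_fun, Fintype.card_fin] at h
    rw [eq_sub_iff_add_eq']
    exact_mod_cast h
  have hs : ‖∑ f, (g f - c)‖ ≤ ((N : ℝ) ^ k - N.descFactorial k) * (K + ‖c‖) := by
    rw [← Finset.sum_filter_of_ne (p := fun f => ¬ Function.Injective f)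
      (fun f _ hne hf => hne (by rw [hinj f hf, sub_self])), ← hcard, ← nsmul_eq_mul]
    refine (norm_sum_le _ _).trans (Finset.sum_le_card_nsmul _ _ _ fun f _ => ?_)
    exact (norm_sub_le _ _).trans (add_le_add_left (hK f) _)
  rw [e, norm_mul, norm_pow, norm_inv, Complex.norm_natCast]
  calc _ ≤ ((N : ℝ)⁻¹) ^ k * (((N : ℝ) ^ k - N.descFactorial k) * (K + ‖c‖)) := by gcongr
    _ = _ := by
        rw [inv_pow]
        field_simp

/-- thermodynamic limit: With the product state `ωN` on each `N`-fold
tensor power of `A` and the mean-field operators `ā^{(N)} = (1/N) ∑ₙ ιₙ a`, for any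
fixed `a₁, …, a_k ∈ A` the expectation values of the ordered products
`ā₁^{(N)} ⋯ ā_k^{(N)}` converge, as `N → ∞`, to `ω a₁ ⋯ ω a_k`. -/
theorem stmt2 (A : Type*) [Ring A] [Algebra ℂ A]
    (ω : A →ₗ[ℂ] ℂ) (hω1 : ω 1 = 1)
    (ωN : ∀ N : ℕ, (⨂[ℂ] _ : Fin N, A) →ₗ[ℂ] ℂ)
    (hωN : ∀ (N : ℕ) (x : Fin N → A), ωN N (⨂ₜ[ℂ] i, x i) = ∏ i, ω (x i))
    (ι : ∀ N : ℕ, Fin N → A → ⨂[ℂ] _ : Fin N, A)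
    (hι : ∀ (N : ℕ) (n : Fin N) (a : A), ι N n a = ⨂ₜ[ℂ] i, (if i = n then a else 1))
    (abar : ∀ N : ℕ, A → ⨂[ℂ] _ : Fin N, A)
    (habar : ∀ (N : ℕ) (a : A), abar N a = (N : ℂ)⁻¹ • ∑ n : Fin N, ι N n a)
    (k : ℕ) (a : Fin k → A) :
    Filter.Tendsto
      (fun N : ℕ => ωN N (((List.finRange k).map (fun i => abar N (a i))).prod))
      Filter.atTop (nhds (∏ i, ω (a i))) := by
  have key : ∀ N : ℕ, ωN N (((List.finRange k).map (fun i => abar N (a i))).prod) =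
      ((N : ℂ)⁻¹) ^ k * ∑ f : Fin k → Fin N, siteValue ω a f := by
    intro N
    simp only [habar]
    rw [prod_smul_sum, map_smul, map_sum, smul_eq_mul]
    congr 1
    refine Finset.sum_congr rfl fun f _ => ?_
    -- The product of the `ι N (f i) (a i)` is the elementary tensor of the clusters.
    have h : ((List.finRange k).map fun i => ι N (f i) (a i)).prod =
        ⨂ₜ[ℂ] n, clusterProd a (Finset.univ.filter fun i => f i = n) := by
      simp only [hι]
      have h2 := map_list_prod (PiTensorProduct.tprodMonoidHom ℂ (A := fun _ : Fin N => A))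
        ((List.finRange k).map fun i => fun n => if n = f i then a i else 1)
      rw [List.map_map] at h2
      refine h2.symm.trans ?_
      rw [PiTensorProduct.tprodMonoidHom_apply]
      congr 1
      ext n
      rw [Pi.list_prod_apply, List.map_map]
      simp [clusterProd, Function.comp_def, eq_comm]
    rw [h, hωN, siteValue]
  simp only [key]
  rw [tendsto_iff_norm_sub_tendsto_zero]
  set K : ℝ := (1 + ∑ S : Finset (Fin k), ‖ω (clusterProd a S)‖) ^ k
  have hlim : Filter.Tendsto (fun N : ℕ =>
      (K + ‖∏ i, ω (a i)‖) * (1 - (N.descFactorial k : ℝ) / (N : ℝ) ^ k)) Filter.atTop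
      (nhds 0) := by
    simpa using ((tendsto_descFactorial_div_pow k).const_sub 1).const_mul (K + ‖∏ i, ω (a i)‖)
  refine squeeze_zero' (Filter.Eventually.of_forall fun _ => norm_nonneg _) ?_ hlim
  filter_upwards [Filter.eventually_gt_atTop 0] with N hN
  exact norm_average_sub_le hN _ _ K (siteValue_of_injective ω hω1 a)
    (norm_siteValue_le ω hω1 a)
end

section
/- Let R be a unital associative algebra over ℂ and φ : R → ℂ a ℂ-linear functional with φ(1) = 1. Let M ≥ 1, let a₁, …, a_M, c₁, …, c_M ∈ R and g_{ij} ∈ ℂ (1 ≤ i, j ≤ M) satisfy: (i) a_i c_j + c_j a_i = g_{ij}·1 for all i, j; (ii) φ(x a_i) = 0 for every x ∈ R and every i. Then φ(a_M a_{M−1} ⋯ a₁ · c₁ c₂ ⋯ c_M) = ∑_{σ ∈ S_M} sgn(σ) ∏_{i=1}^{M} g_{i σ(i)} = det(g_{ij}). -/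
/-!
The annihilator adjacent to the creators, `a 0`, is moved to the right through `c 0 ⋯ c n`.
Each exchange with `c j` flips a sign and leaves a contraction `g 0 j` times the product with `c j`
omitted (`mul_prod_ofFn_of_anticomm`); the final term ends in `a 0` and is killed by `φ`. The result
is `∑ j, (-1) ^ j * g 0 j * φ (⋯)`, where the inner products run over the remaining `a (i + 1)` and
the `c` with `c j` omitted: this is the Laplace expansion of `det g` along row `0`, so induction
on the number of pairs concludes (`vev_eq_det`).
-/

/-- Moving `x` through a product of elements with which it anticommutes up to scalars: the
contraction with the `j`-th factor carries the sign `(-1) ^ j`, and the term in which `x` has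
passed every factor carries `(-1) ^ (n + 1)`. -/
lemma mul_prod_ofFn_of_anticomm {R : Type*} [Ring R] [Algebra ℂ R] (x : R) :
    ∀ (n : ℕ) (c : Fin (n + 1) → R) (g : Fin (n + 1) → ℂ)
      (_ : ∀ j, x * c j + c j * x = g j • (1 : R)),
      x * (List.ofFn c).prod =
        ∑ j : Fin (n + 1), ((-1) ^ (j : ℕ) * g j) • (List.ofFn fun k => c (j.succAbove k)).prod
          + ((-1 : ℂ) ^ (n + 1)) • ((List.ofFn c).prod * x) := by
  intro n
  induction n with
  | zero =>
    intro c g h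
    simp [← h 0]
  | succ n ih =>
    intro c g h
    have h0 : x * c 0 = g 0 • (1 : R) - c 0 * x := eq_sub_of_add_eq (h 0)
    have htail := ih (fun k => c k.succ) (fun k => g k.succ) (fun k => h k.succ)
    rw [List.ofFn_succ, List.prod_cons, ← mul_assoc, h0, sub_mul, mul_assoc, htail,
      Fin.sum_univ_succ (n := n + 1), mul_add, Finset.mul_sum, smul_mul_assoc, one_mul]
    have hterm : ∀ j : Fin (n + 1),
        ((-1 : ℂ) ^ ((j.succ : Fin (n + 2)) : ℕ) * g j.succ) •
            (List.ofFn fun k => c (j.succ.succAbove k)).prod =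
          -(c 0 * (((-1 : ℂ) ^ (j : ℕ) * g j.succ) •
            (List.ofFn fun k => c (j.succAbove k).succ).prod)) := by
      intro j
      rw [List.ofFn_succ, List.prod_cons]
      simp [pow_succ]
    rw [Finset.sum_congr rfl fun j _ => hterm j, Finset.sum_neg_distrib]
    simp only [Fin.val_zero, pow_zero, one_mul, Fin.zero_succAbove, mul_smul_comm, mul_assoc,
      pow_succ _ (n + 1), mul_neg, mul_one, neg_smul]
    abel

/-- The vacuum expectation value as a determinant, with the zero-pair case as the base of the
induction. -/
lemma vev_eq_det {R : Type*} [Ring R] [Algebra ℂ R] (φ : R →ₗ[ℂ] ℂ) (hφ1 : φ 1 = 1) :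
    ∀ (M : ℕ) (a c : Fin M → R) (g : Fin M → Fin M → ℂ)
      (_ : ∀ i j, a i * c j + c j * a i = g i j • (1 : R))
      (_ : ∀ (x : R) (i : Fin M), φ (x * a i) = 0),
      φ ((List.ofFn a).reverse.prod * (List.ofFn c).prod) = Matrix.det (Matrix.of g) := by
  intro M
  induction M with
  | zero =>
    intro a c g _ _
    simp [hφ1]
  | succ n ih =>
    intro a c g hac hvac
    rw [List.ofFn_succ (f := a), List.reverse_cons, List.prod_append, List.prod_singleton,
      mul_assoc, mul_prod_ofFn_of_anticomm (a 0) n c (g 0) (hac 0), mul_add, mul_smul_comm,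
      ← mul_assoc, map_add, map_smul, hvac, smul_zero, add_zero, Finset.mul_sum, map_sum,
      Matrix.det_succ_row_zero]
    refine Finset.sum_congr rfl fun j _ => ?_
    rw [mul_smul_comm, map_smul, smul_eq_mul,
      ih (fun i => a i.succ) (fun k => c (j.succAbove k)) (fun i k => g i.succ (j.succAbove k))
        (fun i k => hac _ _) (fun x i => hvac x _)]
    rfl

/-- fermionic Wick-type determinant formula: If `φ : R → ℂ` is linear
with `φ 1 = 1`, the `aᵢ` and `cⱼ` satisfy `aᵢ cⱼ + cⱼ aᵢ = gᵢⱼ • 1`, and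
`φ (x aᵢ) = 0` for all `x` and `i`, then
`φ (a_M ⋯ a₁ c₁ ⋯ c_M) = ∑_σ sgn σ ∏ᵢ g i (σ i) = det g`. -/
theorem stmt3 (R : Type*) [Ring R] [Algebra ℂ R]
    (φ : R →ₗ[ℂ] ℂ) (hφ1 : φ 1 = 1)
    (M : ℕ) (hM : 1 ≤ M)
    (a c : Fin M → R) (g : Fin M → Fin M → ℂ)
    (hac : ∀ i j, a i * c j + c j * a i = g i j • (1 : R))
    (hvac : ∀ (x : R) (i : Fin M), φ (x * a i) = 0) :
    (φ ((((List.finRange M).reverse.map a).prod) * (((List.finRange M).map c).prod)) =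
        ∑ σ : Equiv.Perm (Fin M),
          ((Equiv.Perm.sign σ : ℤ) : ℂ) * ∏ i : Fin M, g i (σ i)) ∧
    ((∑ σ : Equiv.Perm (Fin M),
          ((Equiv.Perm.sign σ : ℤ) : ℂ) * ∏ i : Fin M, g i (σ i)) =
        Matrix.det (Matrix.of g)) := by
  have hdet : (∑ σ : Equiv.Perm (Fin M),
      ((Equiv.Perm.sign σ : ℤ) : ℂ) * ∏ i : Fin M, g i (σ i)) = Matrix.det (Matrix.of g) := by
    rw [← Matrix.det_transpose, Matrix.det_apply']
    rfl
  refine ⟨?_, hdet⟩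
  rw [hdet, ← vev_eq_det φ hφ1 M a c g hac hvac, List.map_reverse, List.ofFn_eq_map,
    List.ofFn_eq_map]
end
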